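/- arXiv:1105.1084 — 2 statements merged into one kernel-verified Lean document; each statement's English description precedes it below -/
import Mathlib

section
/- Fix m > 0. Suppose τ is a POVM on (ℝ, ℬ(ℝ)) acting on L²(ℝ) such that for all Schwartz functions φ, ψ and all Borel B ⊆ ℝ: ⟨φ, τ(B)ψ⟩ = (1/(2πm)) ∫_B ∫₀^∞ ∫₀^∞ e^{(it/(2m))(p₂² − p₁²)} (conj(φ̂(p₁)) ψ̂(p₂) + conj(φ̂(−p₁)) ψ̂(−p₂)) √(p₁ p₂) dp₁ dp₂ dt, where φ̂ denotes the Fourier–Plancherel transform (the canonical time observable of a free particle of mass m). Then τ is an extreme point of the convex set of ALL POVMs on (ℝ, ℬ(ℝ)) acting on L²(ℝ). -/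
open MeasureTheory Set
open scoped ComplexConjugate SchwartzMap

local notation "⟪" x ", " y "⟫" => @inner ℂ _ _ x y

/-- A normalized positive operator valued measure (POVM). -/
structure POVM (Ω : Type*) [MeasurableSpace Ω] (H : Type*) [NormedAddCommGroup H]
    [InnerProductSpace ℂ H] [CompleteSpace H] where
  toFun : Set Ω → (H →L[ℂ] H)
  isPositive : ∀ B : Set Ω, MeasurableSet B → (toFun B).IsPositive
  normalized : toFun Set.univ = 1
  m_iUnion : ∀ B : ℕ → Set Ω, (∀ k, MeasurableSet (B k)) →
    Pairwise (Function.onFun Disjoint B) → ∀ φ ψ : H,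
      HasSum (fun k => ⟪φ, toFun (B k) ψ⟫) ⟪φ, toFun (⋃ k, B k) ψ⟫

noncomputable section

/-- `L²(ℝ)`. -/
abbrev L2R : Type := Lp ℂ 2 (volume : Measure ℝ)

/-- `ℓ²(ℕ)`. -/
abbrev ell2 : Type := lp (fun _ : ℕ => ℂ) 2

/-- The Fourier(–Plancherel) transform `φ̂(p) = (2π)^{-1/2} ∫ e^{ipx} φ(x) dx`. -/
def fourierT (φ : ℝ → ℂ) (p : ℝ) : ℂ :=
  ((Real.sqrt (2 * Real.pi) : ℝ) : ℂ)⁻¹ * ∫ x : ℝ, Complex.exp (Complex.I * p * x) * φ x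

/-- `V` is (the matrix elements on Schwartz functions of) the free evolution
`V(t) = 𝓕* e^{itp²/(2m)} 𝓕` of a particle of mass `m`. -/
def IsFreeEvolution (m : ℝ) (V : ℝ → (L2R ≃ₗᵢ[ℂ] L2R)) : Prop :=
  ∀ t : ℝ, ∀ φ ψ : 𝓢(ℝ, ℂ),
    ∀ (hφ : MemLp (⇑φ) 2 (volume : Measure ℝ)) (hψ : MemLp (⇑ψ) 2 (volume : Measure ℝ)),
      ⟪hφ.toLp ⇑φ, V t (hψ.toLp ⇑ψ)⟫
        = ∫ p : ℝ, conj (fourierT (⇑φ) p) *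
            Complex.exp (Complex.I * t * p ^ 2 / (2 * m)) * fourierT (⇑ψ) p

/-- Time covariance: `V(t) M(B) V(t)* = M(B + t)`. -/
def TimeCovariant (V : ℝ → (L2R ≃ₗᵢ[ℂ] L2R)) (M : POVM ℝ L2R) : Prop :=
  ∀ t : ℝ, ∀ B : Set ℝ, MeasurableSet B → ∀ φ ψ : L2R,
    ⟪(V t φ : L2R), M.toFun ((fun s => s + t) '' B) (V t ψ)⟫ = ⟪φ, M.toFun B ψ⟫

/-!
A multiplication by `e^{irt}`, `r ≥ 0`, of the time variable can be implemented by a vector of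
`L²(ℝ)`: if `φ` has energy representation `x ↦ g(x)`, supported in the half-line `x > 0`, then
translating `g` to the right by `2mr` gives a vector `ξ_r` whose time amplitude is `e^{irt}` times
the one of `φ`. Translations to the left leave the half-line, which is why `τ` is not projection
valued.

Let `M ≤ C τ` be another POVM. The Cauchy-Schwarz inequality for the positive operators `M(B)`,
summed over the cells of a fine partition of the time axis, yields
`∫ e^{irt} d⟪φ, M φ⟫ = ⟪φ, M(ℝ) ξ_r⟫ = ⟪φ, ξ_r⟫` for `r ≥ 0`. Hence the characteristic function of
`⟪φ, M φ⟫` is the same for all such `M`, including `τ` itself, and `M = τ`. Both components of a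
convex decomposition of `τ` are dominated by multiples of `τ`.
-/

theorem norm_inner_apply_sq_le_of_isPositive {H : Type*} [NormedAddCommGroup H]
    [InnerProductSpace ℂ H] {P : H →L[ℂ] H} (hP : P.IsPositive) (x y : H) :
    ‖⟪x, P y⟫‖ ^ 2 ≤ (⟪x, P x⟫).re * (⟪y, P y⟫).re := by
  let form : PreInnerProductSpace.Core ℂ H :=
    { inner x y := ⟪x, P y⟫
      conj_inner_symm x y := by rw [inner_conj_symm, hP.inner_left_eq_inner_right]
      re_inner_nonneg x := hP.re_inner_nonneg_right x
      add_left x y z := inner_add_left x y (P z)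
      smul_left x y r := inner_smul_left x (P y) r }
  have h_symm : ‖⟪y, P x⟫‖ = ‖⟪x, P y⟫‖ := by
    rw [← hP.inner_left_eq_inner_right, norm_inner_symm]
  have h_cs := @InnerProductSpace.Core.inner_mul_inner_self_le ℂ H _ _ _ form x y
  change ‖⟪x, P y⟫‖ * ‖⟪y, P x⟫‖ ≤ _ at h_cs
  rwa [h_symm, ← sq] at h_cs

theorem exists_measurable_partition_dist_lt {Ω E : Type*} [MeasurableSpace Ω]
    [PseudoMetricSpace E] [TopologicalSpace.SeparableSpace E] [Nonempty E] [MeasurableSpace E]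
    [OpensMeasurableSpace E] {f : Ω → E} (hf : Measurable f) {ε : ℝ} (hε : 0 < ε) :
    ∃ (B : ℕ → Set Ω) (c : ℕ → E), (∀ k, MeasurableSet (B k)) ∧
      Pairwise (Function.onFun Disjoint B) ∧ ⋃ k, B k = univ ∧
      ∀ k, ∀ ω ∈ B k, dist (f ω) (c k) < ε := by
  let c := TopologicalSpace.denseSeq E
  let A : ℕ → Set Ω := fun k => f ⁻¹' Metric.ball (c k) ε
  refine ⟨disjointed A, c, fun k => .disjointed (fun k => hf Metric.isOpen_ball.measurableSet) k,
    disjoint_disjointed A, ?_, fun k ω hω => disjointed_subset A k hω⟩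
  rw [iUnion_disjointed, eq_univ_iff_forall]
  intro ω
  obtain ⟨k, hk⟩ := (TopologicalSpace.denseRange_denseSeq E).exists_dist_lt (f ω) hε
  exact mem_iUnion.mpr ⟨k, hk⟩

theorem integral_integral_mul_add_mul {α β 𝕜 : Type*} [RCLike 𝕜] [MeasurableSpace α]
    [MeasurableSpace β] {μ : Measure α} {ν : Measure β} {f₁ f₂ : α → 𝕜} {g₁ g₂ : β → 𝕜}
    (hf₁ : Integrable f₁ μ) (hf₂ : Integrable f₂ μ) (hg₁ : Integrable g₁ ν)
    (hg₂ : Integrable g₂ ν) :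
    ∫ x, ∫ y, (f₁ x * g₁ y + f₂ x * g₂ y) ∂ν ∂μ
      = (∫ x, f₁ x ∂μ) * (∫ y, g₁ y ∂ν) + (∫ x, f₂ x ∂μ) * (∫ y, g₂ y ∂ν) := by
  simp only [integral_add (hg₁.const_mul _) (hg₂.const_mul _), integral_const_mul,
    integral_add (hf₁.mul_const _) (hf₂.mul_const _), integral_mul_const]

section TestFunction

open scoped Distributions

variable {E : Type*} [NormedAddCommGroup E] [NormedSpace ℝ E] {Ω : TopologicalSpace.Opens E}

/-- The inclusion of the test functions on an open set into the Schwartz space. -/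
def testFunctionToSchwartz : 𝓓(Ω, ℂ) →ₗ[ℂ] 𝓢(E, ℂ) where
  toFun g := g.hasCompactSupport.toSchwartzMap g.contDiff
  map_add' _ _ := rfl
  map_smul' _ _ := rfl

theorem testFunctionToSchwartz_apply (g : 𝓓(Ω, ℂ)) (x : E) : testFunctionToSchwartz g x = g x :=
  rfl

theorem denseRange_toLp_testFunction [FiniteDimensional ℝ E] [MeasurableSpace E] [BorelSpace E]
    {μ : Measure E} [μ.HasTemperateGrowth] [IsLocallyFiniteMeasure μ] (hΩ : ∀ᵐ x ∂μ, x ∈ Ω) :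
    DenseRange fun g : 𝓓(Ω, ℂ) => (testFunctionToSchwartz g).toLp 2 μ := by
  let L : 𝓓(Ω, ℂ) →ₗ[ℂ] Lp ℂ 2 μ :=
    (SchwartzMap.toLpCLM ℂ ℂ 2 μ).toLinearMap ∘ₗ testFunctionToSchwartz
  change Dense (L.range : Set (Lp ℂ 2 μ))
  rw [Submodule.dense_iff_topologicalClosure_eq_top, Submodule.topologicalClosure_eq_top_iff,
    Submodule.eq_bot_iff]
  intro f hf
  have hf_loc : LocallyIntegrable f μ := (Lp.memLp f).locallyIntegrable one_le_two
  have hf_zero : ∀ᵐ x ∂μ, x ∈ Ω → f x = 0 := by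
    refine Ω.isOpen.ae_eq_zero_of_integral_contDiff_smul_eq_zero (hf_loc.locallyIntegrableOn _)
      fun g hg hg_supp hgΩ => ?_
    let g' : 𝓓(Ω, ℂ) :=
      { toFun := fun x => (g x : ℂ)
        contDiff' := Complex.ofRealCLM.contDiff.comp hg
        hasCompactSupport' := hg_supp.comp_left Complex.ofReal_zero
        tsupport_subset' := (tsupport_comp_subset Complex.ofReal_zero g).trans hgΩ }
    rw [← hf (L g') ⟨g', rfl⟩, L2.inner_def]
    refine integral_congr_ae ?_
    filter_upwards [(testFunctionToSchwartz g').coeFn_toLp 2 μ] with x hx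
    have hLx : L g' x = (g x : ℂ) := hx
    rw [hLx, RCLike.inner_apply, Complex.conj_ofReal, Complex.real_smul, mul_comm]
  rw [Lp.eq_zero_iff_ae_eq_zero]
  filter_upwards [hf_zero, hΩ] with x hx hxΩ using hx hxΩ

end TestFunction

namespace POVM

variable {Ω H : Type*} [MeasurableSpace Ω] [NormedAddCommGroup H] [InnerProductSpace ℂ H]
  [CompleteSpace H]

theorem re_inner_nonneg (M : POVM Ω H) (φ : H) {B : Set Ω} (hB : MeasurableSet B) :
    0 ≤ (⟪φ, M.toFun B φ⟫).re :=
  (M.isPositive B hB).re_inner_nonneg_right φ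

theorem inner_empty (M : POVM Ω H) (φ ψ : H) : ⟪φ, M.toFun ∅ ψ⟫ = 0 := by
  have h_sum := M.m_iUnion (fun _ => ∅) (fun _ => .empty) (fun _ _ _ => disjoint_bot_left) φ ψ
  exact tendsto_nhds_unique tendsto_const_nhds h_sum.summable.tendsto_atTop_zero

/-- The scalar measure `B ↦ ⟪φ, M(B) φ⟫` of a POVM at a vector `φ`. -/
def meas (M : POVM Ω H) (φ : H) : Measure Ω :=
  .ofMeasurable (fun B _ => ENNReal.ofReal (⟪φ, M.toFun B φ⟫).re)
    (by rw [inner_empty, Complex.zero_re, ENNReal.ofReal_zero])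
    (fun B hB h_disj => by
      have h_sum := Complex.hasSum_re (M.m_iUnion B hB h_disj φ φ)
      rw [← h_sum.tsum_eq,
        ENNReal.ofReal_tsum_of_nonneg (fun k => M.re_inner_nonneg φ (hB k)) h_sum.summable])

theorem meas_apply (M : POVM Ω H) (φ : H) {B : Set Ω} (hB : MeasurableSet B) :
    M.meas φ B = ENNReal.ofReal (⟪φ, M.toFun B φ⟫).re :=
  Measure.ofMeasurable_apply B hB

instance isFiniteMeasure_meas (M : POVM Ω H) (φ : H) : IsFiniteMeasure (M.meas φ) :=
  ⟨by rw [M.meas_apply φ .univ]; exact ENNReal.ofReal_lt_top⟩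

theorem measureReal_meas (M : POVM Ω H) (φ : H) {B : Set Ω} (hB : MeasurableSet B) :
    (M.meas φ).real B = (⟪φ, M.toFun B φ⟫).re := by
  rw [measureReal_def, M.meas_apply φ hB, ENNReal.toReal_ofReal (M.re_inner_nonneg φ hB)]

theorem inner_self_eq_measureReal (M : POVM Ω H) (φ : H) {B : Set Ω} (hB : MeasurableSet B) :
    ⟪φ, M.toFun B φ⟫ = (M.meas φ).real B := by
  rw [M.measureReal_meas φ hB]
  exact Complex.eq_re_of_ofReal_le ((M.isPositive B hB).inner_nonneg_right φ)

theorem measureReal_meas_univ (M : POVM Ω H) (φ : H) : (M.meas φ).real univ = ‖φ‖ ^ 2 := by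
  rw [M.measureReal_meas φ .univ, M.normalized]
  exact inner_self_eq_norm_sq (𝕜 := ℂ) φ

theorem measureReal_meas_le_of_le_smul {M τ : POVM Ω H} {C : ℝ} {B : Set Ω}
    (hB : MeasurableSet B) (hM : M.toFun B ≤ C • τ.toFun B) (φ : H) :
    (M.meas φ).real B ≤ C * (τ.meas φ).real B := by
  have h_diff : 0 ≤ (⟪φ, (C • τ.toFun B - M.toFun B) φ⟫).re := hM.re_inner_nonneg_right φ
  rw [sub_apply, smul_apply, inner_sub_right, inner_smul_right_eq_smul, Complex.sub_re,
    Complex.smul_re, smul_eq_mul, sub_nonneg] at h_diff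
  rwa [M.measureReal_meas φ hB, τ.measureReal_meas φ hB]

theorem meas_le_smul_meas {M τ : POVM Ω H} {C : ℝ}
    (hM : ∀ B, MeasurableSet B → M.toFun B ≤ C • τ.toFun B) (φ : H) :
    M.meas φ ≤ ENNReal.ofReal C • τ.meas φ := by
  refine Measure.le_intro fun B hB _ => ?_
  rw [Measure.smul_apply, smul_eq_mul, ← ofReal_measureReal, ← ofReal_measureReal,
    ← ENNReal.ofReal_mul' measureReal_nonneg]
  exact ENNReal.ofReal_le_ofReal (measureReal_meas_le_of_le_smul hB (hM B hB) φ)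

theorem toFun_eq_of_meas_eq {M N : POVM Ω H} {S : Set H} (hS : Dense S)
    (h : ∀ φ ∈ S, M.meas φ = N.meas φ) {B : Set Ω} (hB : MeasurableSet B) :
    M.toFun B = N.toFun B := by
  have h_quad : (fun φ => ⟪M.toFun B φ, φ⟫) = fun φ => ⟪N.toFun B φ, φ⟫ := by
    refine Continuous.ext_on hS (by fun_prop) (by fun_prop) fun φ hφ => ?_
    simp only [(M.isPositive B hB).inner_left_eq_inner_right,
      (N.isPositive B hB).inner_left_eq_inner_right, inner_self_eq_measureReal _ _ hB, h φ hφ]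
  exact ContinuousLinearMap.coe_injective <|
    (ext_inner_map (M.toFun B).toLinearMap (N.toFun B).toLinearMap).mp (congrFun h_quad)

/-- `τ.RepresentsMul f φ ξ`: in a Naimark dilation of `τ` to a projection valued measure, `ξ`
is the vector `f · φ`. Without reference to a dilation, this is the requirement that
`d⟪ξ - c φ, τ (ξ - c φ)⟫ = |f - c|² d⟪φ, τ φ⟫` for all constants `c`. -/
def RepresentsMul (τ : POVM Ω H) (f : Ω → ℂ) (φ ξ : H) : Prop :=
  ∀ c : ℂ, τ.meas (ξ - c • φ) = (τ.meas φ).withDensity fun ω => ‖f ω - c‖ₑ ^ 2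

theorem RepresentsMul.memLp {τ : POVM Ω H} {f : Ω → ℂ} {φ ξ : H} (h : τ.RepresentsMul f φ ξ)
    (hf : Measurable f) : MemLp f 2 (τ.meas φ) := by
  refine ⟨hf.aestronglyMeasurable, ?_⟩
  rw [eLpNorm_lt_top_iff_lintegral_rpow_enorm_lt_top two_ne_zero ENNReal.ofNat_ne_top]
  have h_univ := congrArg (· univ) (h 0)
  simp only [sub_zero, withDensity_apply _ MeasurableSet.univ, Measure.restrict_univ] at h_univ
  simp [← h_univ]

theorem RepresentsMul.measureReal_le {τ : POVM Ω H} {f : Ω → ℂ} {φ ξ : H}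
    (h : τ.RepresentsMul f φ ξ) {B : Set Ω} (hB : MeasurableSet B) {c : ℂ} {ε : ℝ}
    (hc : ∀ ω ∈ B, dist (f ω) c < ε) :
    (τ.meas (ξ - c • φ)).real B ≤ ε ^ 2 * (τ.meas φ).real B := by
  rcases B.eq_empty_or_nonempty with rfl | ⟨ω₀, hω₀⟩
  · simp
  have hε : 0 ≤ ε := dist_nonneg.trans (hc ω₀ hω₀).le
  have h_le : τ.meas (ξ - c • φ) B ≤ ENNReal.ofReal ε ^ 2 * τ.meas φ B := by
    rw [h c, withDensity_apply _ hB, ← setLIntegral_const]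
    refine setLIntegral_mono' hB fun ω hω => ?_
    rw [← ofReal_norm, ← dist_eq_norm]
    gcongr
    exact (hc ω hω).le
  have h_real := ENNReal.toReal_mono (by finiteness) h_le
  simpa [measureReal_def, hε] using h_real

theorem RepresentsMul.norm_inner_sub_setIntegral_le {τ M : POVM Ω H} {f : Ω → ℂ} {φ ξ : H}
    (h : τ.RepresentsMul f φ ξ) (hf : Integrable f (M.meas φ)) {C : ℝ} (hC : 0 ≤ C) {B : Set Ω}
    (hB : MeasurableSet B) (hM : M.toFun B ≤ C • τ.toFun B) {c : ℂ} {ε : ℝ} (hε : 0 ≤ ε)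
    (hc : ∀ ω ∈ B, dist (f ω) c < ε) :
    ‖⟪φ, M.toFun B ξ⟫ - ∫ ω in B, f ω ∂(M.meas φ)‖ ≤ 2 * C * ε * (τ.meas φ).real B := by
  have h_split : ⟪φ, M.toFun B ξ⟫ - ∫ ω in B, f ω ∂(M.meas φ)
      = ⟪φ, M.toFun B (ξ - c • φ)⟫ - ∫ ω in B, (f ω - c) ∂(M.meas φ) := by
    rw [integral_sub hf.integrableOn (integrable_const c), setIntegral_const, map_sub, map_smul,
      inner_sub_right, inner_smul_right, M.inner_self_eq_measureReal φ hB, Complex.real_smul]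
    ring
  have h_dom (x : H) := measureReal_meas_le_of_le_smul hB hM x
  have h_inner : ‖⟪φ, M.toFun B (ξ - c • φ)⟫‖ ≤ C * ε * (τ.meas φ).real B := by
    refine le_of_sq_le_sq ?_ (by positivity)
    calc ‖⟪φ, M.toFun B (ξ - c • φ)⟫‖ ^ 2
        ≤ (M.meas φ).real B * (M.meas (ξ - c • φ)).real B := by
          rw [M.measureReal_meas _ hB, M.measureReal_meas _ hB]
          exact norm_inner_apply_sq_le_of_isPositive (M.isPositive B hB) _ _
      _ ≤ (C * (τ.meas φ).real B) * (C * (ε ^ 2 * (τ.meas φ).real B)) := by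
          gcongr
          · exact h_dom φ
          · exact (h_dom _).trans (by gcongr; exact h.measureReal_le hB hc)
      _ = (C * ε * (τ.meas φ).real B) ^ 2 := by ring
  have h_integral : ‖∫ ω in B, (f ω - c) ∂(M.meas φ)‖ ≤ C * ε * (τ.meas φ).real B :=
    calc ‖∫ ω in B, (f ω - c) ∂(M.meas φ)‖
        ≤ ε * (M.meas φ).real B :=
          norm_setIntegral_le_of_norm_le_const (measure_lt_top _ _) fun ω hω =>
            (dist_eq_norm (f ω) c).symm.trans_le (hc ω hω).le
      _ ≤ ε * (C * (τ.meas φ).real B) := by gcongr; exact h_dom φ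
      _ = C * ε * (τ.meas φ).real B := by ring
  rw [h_split]
  linarith [norm_sub_le ⟪φ, M.toFun B (ξ - c • φ)⟫ (∫ ω in B, (f ω - c) ∂(M.meas φ))]

/-- The right-hand side involves `M` only through its normalization `M(Ω) = 1`: this is what
makes `M` independent of the choice of a POVM dominated by `τ`. -/
theorem RepresentsMul.integral_meas_eq_inner {τ M : POVM Ω H} {f : Ω → ℂ} {φ ξ : H}
    (h : τ.RepresentsMul f φ ξ) (hf : Measurable f) {C : ℝ} (hC : 0 ≤ C)
    (hM : ∀ B, MeasurableSet B → M.toFun B ≤ C • τ.toFun B) :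
    ∫ ω, f ω ∂(M.meas φ) = ⟪φ, ξ⟫ := by
  have hf_int : Integrable f (M.meas φ) :=
    ((h.memLp hf).of_measure_le_smul ENNReal.ofReal_ne_top
      (meas_le_smul_meas hM φ)).integrable one_le_two
  have h_bound (ε : ℝ) (hε : 0 < ε) :
      ‖⟪φ, ξ⟫ - ∫ ω, f ω ∂(M.meas φ)‖ ≤ 2 * C * ε * ‖φ‖ ^ 2 := by
    obtain ⟨B, c, hB, h_disj, h_univ, hc⟩ := exists_measurable_partition_dist_lt hf hε
    have h_inner := M.m_iUnion B hB h_disj φ ξ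
    have h_integral := hasSum_integral_iUnion hB h_disj hf_int.integrableOn
    have h_total := (Complex.hasSum_re (τ.m_iUnion B hB h_disj φ φ)).mul_left (2 * C * ε)
    simp only [h_univ, M.normalized, one_apply_eq_self, setIntegral_univ,
      ← τ.measureReal_meas φ .univ, ← τ.measureReal_meas φ (hB _),
      τ.measureReal_meas_univ] at h_inner h_integral h_total
    exact (h_inner.sub h_integral).norm_le_of_bounded h_total fun k =>
      h.norm_inner_sub_setIntegral_le hf_int hC (hB k) (hM _ (hB k)) hε.le (hc k)
  have h_lim : Filter.Tendsto (fun ε : ℝ => 2 * C * ε * ‖φ‖ ^ 2) (nhdsWithin 0 (Ioi 0))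
      (nhds 0) := by
    have h_cont : Continuous fun ε : ℝ => 2 * C * ε * ‖φ‖ ^ 2 := by fun_prop
    simpa using (h_cont.tendsto 0).mono_left nhdsWithin_le_nhds
  have h_zero := ge_of_tendsto h_lim (eventually_mem_nhdsWithin.mono h_bound)
  exact (sub_eq_zero.mp (norm_le_zero_iff.mp h_zero)).symm

/-- Frequencies `r ≥ 0` suffice because `charFun μ (-r) = conj (charFun μ r)`. -/
theorem toFun_eq_of_le_smul {τ M : POVM ℝ H} {S : Set H} (hS : Dense S)
    (h : ∀ φ ∈ S, ∀ r : ℝ, 0 ≤ r →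
      ∃ ξ, τ.RepresentsMul (fun t => Complex.exp (r * t * Complex.I)) φ ξ)
    {C : ℝ} (hC : 0 ≤ C) (hM : ∀ B, MeasurableSet B → M.toFun B ≤ C • τ.toFun B)
    {B : Set ℝ} (hB : MeasurableSet B) : M.toFun B = τ.toFun B := by
  refine toFun_eq_of_meas_eq hS (fun φ hφ => ?_) hB
  have h_charFun (r : ℝ) (hr : 0 ≤ r) : charFun (M.meas φ) r = charFun (τ.meas φ) r := by
    obtain ⟨ξ, hξ⟩ := h φ hφ r hr
    have hf : Measurable fun t : ℝ => Complex.exp (r * t * Complex.I) := by fun_prop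
    rw [charFun_apply_real, charFun_apply_real, hξ.integral_meas_eq_inner hf hC hM,
      hξ.integral_meas_eq_inner hf zero_le_one fun B _ => (one_smul ℝ (τ.toFun B)).ge]
  refine Measure.ext_of_charFun (funext fun r => ?_)
  rcases le_total 0 r with hr | hr
  · exact h_charFun r hr
  · exact star_injective (by simpa [charFun_neg] using h_charFun (-r) (neg_nonneg.mpr hr))

theorem le_inv_smul_of_eq_smul_add_smul {τ M N : POVM Ω H} {a b : ℝ} (ha : 0 < a) (hb : 0 ≤ b)
    {B : Set Ω} (hB : MeasurableSet B) (h : τ.toFun B = a • M.toFun B + b • N.toFun B) :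
    M.toFun B ≤ a⁻¹ • τ.toFun B := by
  have h_diff : a⁻¹ • τ.toFun B - M.toFun B = (a⁻¹ * b) • N.toFun B := by
    rw [h, smul_add, smul_smul, smul_smul, inv_mul_cancel₀ ha.ne', one_smul, add_sub_cancel_left]
  rw [ContinuousLinearMap.le_def, h_diff, ← Complex.coe_smul]
  exact (N.isPositive B hB).smul_of_nonneg (Complex.zero_le_real.mpr (by positivity))

end POVM

namespace TimeObservable

open FourierTransform
open scoped Distributions

/-- The momentum axis without the point `p = 0`, where the energy `p²` is not a local coordinate.
Its test functions are the momentum representations of the states considered below. -/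
def puncturedLine : TopologicalSpace.Opens ℝ := ⟨{0}ᶜ, isOpen_compl_singleton⟩

theorem apply_zero (g : 𝓓(puncturedLine, ℂ)) : g 0 = 0 :=
  image_eq_zero_of_notMem_tsupport fun h => g.tsupport_subset h rfl

/-- The dilation `g ↦ g(· * c)` of test functions; for `c = -1` it is the reflection. -/
def dilate (c : ℝˣ) : 𝓓(puncturedLine, ℂ) →ₗ[ℂ] 𝓓(puncturedLine, ℂ) where
  toFun g :=
    { toFun := fun p => g (p * c)
      contDiff' := g.contDiff.comp (contDiff_id.mul contDiff_const)
      hasCompactSupport' :=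
        g.hasCompactSupport.comp_homeomorph (Homeomorph.mulRight₀ (c : ℝ) c.ne_zero)
      tsupport_subset' := fun p hp => by
        have h_mem : p * c ∈ tsupport g :=
          tsupport_comp_subset_preimage g (f := fun p => p * (c : ℝ)) (by fun_prop) hp
        exact left_ne_zero_of_mul (g.tsupport_subset h_mem) }
  map_add' _ _ := rfl
  map_smul' _ _ := rfl

theorem dilate_apply (c : ℝˣ) (g : 𝓓(puncturedLine, ℂ)) (p : ℝ) : dilate c g p = g (p * c) :=
  rfl

theorem dilate_surjective (c : ℝˣ) : Function.Surjective (dilate c) := fun g =>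
  ⟨dilate c⁻¹ g, TestFunction.ext fun p => by simp [dilate_apply]⟩

theorem fourierT_eq_fourierInv (φ : ℝ → ℂ) (p : ℝ) :
    fourierT φ p = ((√(2 * Real.pi) : ℝ) : ℂ)⁻¹ * 𝓕⁻ φ (p * (2 * Real.pi)⁻¹) := by
  have h_phase (x : ℝ) :
      ((2 * Real.pi * inner ℝ x (p * (2 * Real.pi)⁻¹) : ℝ) : ℂ) * Complex.I
        = Complex.I * p * x := by
    rw [RCLike.inner_apply, conj_trivial]
    push_cast
    field_simp
  simp only [fourierT, Real.fourierInv_eq', h_phase, smul_eq_mul]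

theorem sqrt_two_pi_ne_zero : ((√(2 * Real.pi) : ℝ) : ℂ) ≠ 0 :=
  Complex.ofReal_ne_zero.mpr (Real.sqrt_pos.mpr Real.two_pi_pos).ne'

/-- The dilation factor `2π` between the angular frequencies of `fourierT` and the ordinary
frequencies of Mathlib's Fourier transform. -/
def twoPi : ℝˣ := .mk0 (2 * Real.pi) Real.two_pi_pos.ne'

/-- The Schwartz function with Fourier transform `g`, in the convention of `fourierT`. -/
def ofMomentum : 𝓓(puncturedLine, ℂ) →ₗ[ℂ] 𝓢(ℝ, ℂ) :=
  ((√(2 * Real.pi) : ℝ) : ℂ) • (fourierCLM ℂ 𝓢(ℝ, ℂ)).toLinearMap ∘ₗ testFunctionToSchwartz ∘ₗ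
    dilate twoPi

theorem ofMomentum_apply (g : 𝓓(puncturedLine, ℂ)) :
    ofMomentum g = ((√(2 * Real.pi) : ℝ) : ℂ) •
      𝓕 (testFunctionToSchwartz (dilate twoPi g)) :=
  rfl

theorem fourierT_ofMomentum (g : 𝓓(puncturedLine, ℂ)) : fourierT (ofMomentum g) = g := by
  funext p
  rw [fourierT_eq_fourierInv, ← SchwartzMap.fourierInv_coe, ofMomentum_apply,
    FourierTransform.fourierInv_smul, FourierTransform.fourierInv_fourier_eq, smul_apply,
    smul_eq_mul, inv_mul_cancel_left₀ sqrt_two_pi_ne_zero, testFunctionToSchwartz_apply,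
    dilate_apply, twoPi, Units.val_mk0, inv_mul_cancel_right₀ Real.two_pi_pos.ne']

/-- The vector of `L²(ℝ)` with momentum representation `g`. -/
def momentumState : 𝓓(puncturedLine, ℂ) →ₗ[ℂ] L2R :=
  (SchwartzMap.toLpCLM ℂ ℂ 2 volume).toLinearMap ∘ₗ ofMomentum

theorem momentumState_injective : Function.Injective momentumState := by
  refine (SchwartzMap.injective_toLp 2 volume).comp fun g h hgh => TestFunction.ext fun p => ?_
  rw [← fourierT_ofMomentum g, ← fourierT_ofMomentum h, hgh]

theorem momentumState_apply (g : 𝓓(puncturedLine, ℂ)) :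
    momentumState g = ((√(2 * Real.pi) : ℝ) : ℂ) • Lp.fourierTransformₗᵢ ℝ ℂ
      ((testFunctionToSchwartz (dilate twoPi g)).toLp 2) := by
  change SchwartzMap.toLpCLM ℂ ℂ 2 volume (ofMomentum g) = _
  rw [ofMomentum_apply, map_smul]
  congr 1
  exact (SchwartzMap.toLp_fourier_eq _).symm

theorem denseRange_momentumState : DenseRange momentumState := by
  have h_ae : ∀ᵐ x : ℝ, x ∈ puncturedLine := compl_mem_ae_iff.mpr (measure_singleton 0)
  let F : L2R → L2R := fun f => ((√(2 * Real.pi) : ℝ) : ℂ) • Lp.fourierTransformₗᵢ ℝ ℂ f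
  have hF : Function.Surjective F :=
    (MulAction.surjective₀ sqrt_two_pi_ne_zero).comp (Lp.fourierTransformₗᵢ ℝ ℂ).surjective
  have h_range : range momentumState = F '' range fun g : 𝓓(puncturedLine, ℂ) =>
      (testFunctionToSchwartz g).toLp 2 := by
    rw [funext momentumState_apply, ← range_comp]
    exact (dilate_surjective _).range_comp fun g => F ((testFunctionToSchwartz g).toLp 2)
  rw [DenseRange, h_range]
  exact hF.denseRange.dense_image (by fun_prop) (denseRange_toLp_testFunction h_ae)

section MomentumShift

variable {a p : ℝ}

/-- The momentum with the direction of `p` and square `p² - a`; it is `0` when `p² ≤ a`. -/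
def momentumShift (a p : ℝ) : ℝ := p * √(1 - a / p ^ 2)

theorem momentumShift_neg : momentumShift a (-p) = -momentumShift a p := by
  rw [momentumShift, momentumShift, neg_sq, neg_mul]

theorem abs_momentumShift_le (ha : 0 ≤ a) : |momentumShift a p| ≤ |p| := by
  rw [momentumShift, abs_mul, abs_of_nonneg (Real.sqrt_nonneg _)]
  refine mul_le_of_le_one_right (abs_nonneg p) (Real.sqrt_le_one.mpr ?_)
  linarith [show 0 ≤ a / p ^ 2 by positivity]

theorem continuous_momentumShift (ha : 0 ≤ a) : Continuous (momentumShift a) := by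
  refine continuous_iff_continuousAt.mpr fun p => ?_
  rcases eq_or_ne p 0 with rfl | hp
  · have h_zero : momentumShift a 0 = 0 := zero_mul _
    rw [ContinuousAt, h_zero]
    exact squeeze_zero_norm (fun q => abs_momentumShift_le ha)
      (continuous_abs.tendsto' 0 0 abs_zero)
  · unfold momentumShift
    fun_prop (disch := positivity)

theorem momentumShift_of_pos (hp : 0 < p) : momentumShift a p = √(p ^ 2 - a) := by
  rw [show p ^ 2 - a = p ^ 2 * (1 - a / p ^ 2) by field_simp, Real.sqrt_mul (sq_nonneg p),
    Real.sqrt_sq hp.le, momentumShift]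

theorem sq_le_momentumShift_sq_add (ha : 0 ≤ a) : p ^ 2 ≤ momentumShift a p ^ 2 + a := by
  rcases eq_or_ne p 0 with rfl | hp
  · rw [zero_pow two_ne_zero]
    positivity
  · calc p ^ 2 = p ^ 2 * (1 - a / p ^ 2) + a := by field_simp; ring
      _ ≤ p ^ 2 * √(1 - a / p ^ 2) ^ 2 + a := by
        gcongr
        exact Real.sq_sqrt' (x := 1 - a / p ^ 2) ▸ le_max_left _ _
      _ = momentumShift a p ^ 2 + a := by rw [momentumShift, mul_pow]

theorem isCompact_preimage_momentumShift (ha : 0 ≤ a) {K : Set ℝ} (hK : IsCompact K) :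
    IsCompact (momentumShift a ⁻¹' K) := by
  obtain ⟨R, hR⟩ := hK.isBounded.exists_norm_le
  refine Metric.isCompact_of_isClosed_isBounded (hK.isClosed.preimage (continuous_momentumShift ha))
    (isBounded_iff_forall_norm_le.mpr ⟨√(R ^ 2 + a), fun p hp => Real.abs_le_sqrt ?_⟩)
  calc p ^ 2 ≤ |momentumShift a p| ^ 2 + a := by
        rw [sq_abs]
        exact sq_le_momentumShift_sq_add ha
    _ ≤ R ^ 2 + a := by gcongr; exact hR _ hp

/-- The function `g` with its energies `p²` increased by `a`. The second factor is the square root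
of the Jacobian `p / momentumShift a p`; it makes the substitution unitary. -/
def energyShiftFun (a : ℝ) (g : ℝ → ℂ) (p : ℝ) : ℂ :=
  g (momentumShift a p) * ((√√(1 - a / p ^ 2) : ℝ) : ℂ)⁻¹

theorem tsupport_energyShiftFun_subset (ha : 0 ≤ a) (g : ℝ → ℂ) :
    tsupport (energyShiftFun a g) ⊆ momentumShift a ⁻¹' tsupport g :=
  (tsupport_mul_subset_left).trans
    (tsupport_comp_subset_preimage g (continuous_momentumShift ha))

theorem contDiff_energyShiftFun (ha : 0 ≤ a) {g : ℝ → ℂ} {n : ℕ∞} (hg : ContDiff ℝ n g)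
    (hg₀ : 0 ∉ tsupport g) : ContDiff ℝ n (energyShiftFun a g) := by
  refine contMDiff_iff_contDiff.mp (contMDiff_of_tsupport fun p hp => ContDiffAt.contMDiffAt ?_)
  have hp' : momentumShift a p ≠ 0 := fun h =>
    hg₀ (h ▸ tsupport_energyShiftFun_subset ha g hp)
  have h_pos : 0 < 1 - a / p ^ 2 := Real.sqrt_ne_zero'.mp (right_ne_zero_of_mul hp')
  have hp₀ : p ^ 2 ≠ 0 := pow_ne_zero 2 (left_ne_zero_of_mul hp')
  have h_inner : ContDiffAt ℝ n (fun p : ℝ => 1 - a / p ^ 2) p := by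
    fun_prop (disch := assumption)
  have h_sqrt := h_inner.sqrt h_pos.ne'
  have h_sqrt_sqrt := h_sqrt.sqrt (Real.sqrt_pos.mpr h_pos).ne'
  refine (hg.contDiffAt.comp p (contDiffAt_id.mul h_sqrt)).mul ?_
  exact (Complex.ofRealCLM.contDiff.contDiffAt.comp p h_sqrt_sqrt).inv
    (Complex.ofReal_ne_zero.mpr (Real.sqrt_pos.mpr (Real.sqrt_pos.mpr h_pos)).ne')

end MomentumShift

/-- The translation of the energy variable `x = p²` to the right by `a`, on each of the two
half-lines of momenta `p > 0` and `p < 0`; see `energyRep_energyShift`. -/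
def energyShift (a : NNReal) (g : 𝓓(puncturedLine, ℂ)) : 𝓓(puncturedLine, ℂ) :=
  have hg₀ : 0 ∉ tsupport g := fun h => g.tsupport_subset h rfl
  have h_tsupport := tsupport_energyShiftFun_subset a.2 g
  { toFun := energyShiftFun a g
    contDiff' := contDiff_energyShiftFun a.2 g.contDiff hg₀
    hasCompactSupport' :=
      (isCompact_preimage_momentumShift a.2 g.hasCompactSupport).of_isClosed_subset
        (isClosed_tsupport _) h_tsupport
    tsupport_subset' := fun p hp hp₀ => hg₀ <| by
      have h_mem : momentumShift a p ∈ tsupport g := h_tsupport hp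
      rwa [momentumShift, mem_singleton_iff.mp hp₀, zero_mul] at h_mem }

theorem energyShift_apply (a : NNReal) (g : 𝓓(puncturedLine, ℂ)) (p : ℝ) :
    energyShift a g p = g (momentumShift a p) * ((√√(1 - a / p ^ 2) : ℝ) : ℂ)⁻¹ :=
  rfl

theorem dilate_neg_one_energyShift (a : NNReal) (g : 𝓓(puncturedLine, ℂ)) :
    dilate (-1) (energyShift a g) = energyShift a (dilate (-1) g) := by
  ext p
  simp [dilate_apply, energyShift_apply, momentumShift_neg]

/-- The representation of the positive-momentum part of `g` in the energy variable `x = p²`, up to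
a constant factor. It vanishes for `x ≤ 0` because `√x = 0` there. -/
def energyRep (g : 𝓓(puncturedLine, ℂ)) (x : ℝ) : ℂ := g √x * ((√√x : ℝ) : ℂ)⁻¹

theorem energyRep_of_nonpos (g : 𝓓(puncturedLine, ℂ)) {x : ℝ} (hx : x ≤ 0) :
    energyRep g x = 0 := by
  rw [energyRep, Real.sqrt_eq_zero_of_nonpos hx, apply_zero, zero_mul]

theorem energyRep_energyShift (a : NNReal) (g : 𝓓(puncturedLine, ℂ)) (x : ℝ) :
    energyRep (energyShift a g) x = energyRep g (x - a) := by
  rcases le_or_gt x 0 with hx | hx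
  · rw [energyRep_of_nonpos _ hx, energyRep_of_nonpos _ (by linarith [a.2])]
  have h_shift : momentumShift a √x = √(x - a) := by
    rw [momentumShift_of_pos (Real.sqrt_pos.mpr hx), Real.sq_sqrt hx.le]
  have h_jacobian : √√(1 - a / √x ^ 2) * √√x = √√(x - a) := by
    rw [mul_comm, ← Real.sqrt_mul (Real.sqrt_nonneg x), ← h_shift, momentumShift]
  rw [energyRep, energyRep, energyShift_apply, h_shift, mul_assoc, ← mul_inv, ← Complex.ofReal_mul,
    h_jacobian]

/-- The integrand `e^{isp²} g(p) √p` of the time amplitude at `s = t / (2m)`. -/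
def amplitudeIntegrand (s : ℝ) (g : 𝓓(puncturedLine, ℂ)) (p : ℝ) : ℂ :=
  Complex.exp (Complex.I * s * p ^ 2) * g p * (√p : ℝ)

theorem integrable_amplitudeIntegrand (s : ℝ) (g : 𝓓(puncturedLine, ℂ)) :
    Integrable (amplitudeIntegrand s g) :=
  Continuous.integrable_of_hasCompactSupport (by unfold amplitudeIntegrand; fun_prop)
    g.hasCompactSupport.mul_left.mul_right

/-- The time amplitude at `s = t / (2m)` of the positive-momentum part of `g`; the one of the
negative-momentum part is obtained from the reflection `dilate (-1) g`. -/
def amplitude (s : ℝ) (g : 𝓓(puncturedLine, ℂ)) : ℂ := ∫ p in Ioi 0, amplitudeIntegrand s g p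

theorem amplitude_sub_smul (s : ℝ) (g h : 𝓓(puncturedLine, ℂ)) (c : ℂ) :
    amplitude s (g - c • h) = amplitude s g - c * amplitude s h := by
  rw [amplitude, amplitude, amplitude, ← integral_const_mul, ← integral_sub
    (integrable_amplitudeIntegrand s g).integrableOn
    ((integrable_amplitudeIntegrand s h).integrableOn.const_mul c)]
  congr with p
  simp only [amplitudeIntegrand, sub_apply, smul_apply, smul_eq_mul]
  ring

theorem amplitude_eq_integral_energyRep (s : ℝ) (g : 𝓓(puncturedLine, ℂ)) :
    amplitude s g = ∫ x : ℝ, Complex.exp (Complex.I * s * x) * (2⁻¹ * energyRep g x) := by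
  have h_subst (p : ℝ) (hp : p ∈ Ioi 0) : amplitudeIntegrand s g p =
      ((2 : ℝ) * p ^ ((2 : ℝ) - 1)) • (Complex.exp (Complex.I * s * (p ^ (2 : ℝ) : ℝ)) *
        (2⁻¹ * energyRep g (p ^ (2 : ℝ)))) := by
    have hp : 0 < p := hp
    have h_sqrt : ((√p : ℝ) : ℂ) ≠ 0 := Complex.ofReal_ne_zero.mpr (Real.sqrt_pos.mpr hp).ne'
    have h_sq : ((√p : ℝ) : ℂ) ^ 2 = p := mod_cast Real.sq_sqrt hp.le
    rw [amplitudeIntegrand, energyRep, Real.rpow_two, Real.sqrt_sq hp.le, Complex.real_smul,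
      show (2 : ℝ) - 1 = 1 by norm_num, Real.rpow_one]
    push_cast
    rw [← h_sq]
    field_simp
  rw [amplitude, setIntegral_congr_fun measurableSet_Ioi h_subst, integral_comp_rpow_Ioi_of_pos
    (g := fun x : ℝ => Complex.exp (Complex.I * s * x) * (2⁻¹ * energyRep g x)) two_pos]
  refine setIntegral_eq_integral_of_forall_compl_eq_zero fun x hx => ?_
  rw [energyRep_of_nonpos g (not_lt.mp hx), mul_zero, mul_zero]

theorem amplitude_energyShift (s : ℝ) (a : NNReal) (g : 𝓓(puncturedLine, ℂ)) :
    amplitude s (energyShift a g) = Complex.exp (Complex.I * s * a) * amplitude s g := by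
  let G : ℝ → ℂ := fun x => Complex.exp (Complex.I * s * (x + a)) * (2⁻¹ * energyRep g x)
  have hG (x : ℝ) : G x = Complex.exp (Complex.I * s * a) *
      (Complex.exp (Complex.I * s * x) * (2⁻¹ * energyRep g x)) := by
    simp only [G, mul_add, Complex.exp_add]
    ring
  rw [amplitude_eq_integral_energyRep, amplitude_eq_integral_energyRep]
  calc ∫ x : ℝ, Complex.exp (Complex.I * s * x) * (2⁻¹ * energyRep (energyShift a g) x)
      = ∫ x : ℝ, G (x - a) := by simp [G, energyRep_energyShift]
    _ = ∫ x : ℝ, G x := integral_sub_right_eq_self G (a : ℝ)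
    _ = _ := by simp only [hG, integral_const_mul]

/-- The (unnormalized) probability density, with respect to `dt`, of the canonical time observable
of a particle of mass `m` in the state with momentum representation `g`. -/
def timeDensity (m : ℝ) (g : 𝓓(puncturedLine, ℂ)) (t : ℝ) : ℝ :=
  (2 * Real.pi * m)⁻¹ *
    (‖amplitude (t / (2 * m)) g‖ ^ 2 + ‖amplitude (t / (2 * m)) (dilate (-1) g)‖ ^ 2)

theorem timeDensity_nonneg {m : ℝ} (hm : 0 < m) (g : 𝓓(puncturedLine, ℂ)) (t : ℝ) :
    0 ≤ timeDensity m g t := by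
  unfold timeDensity; positivity

theorem timeDensity_energyShift_sub_smul {m : ℝ} (hm : 0 < m) {r : ℝ} (hr : 0 ≤ r)
    (g : 𝓓(puncturedLine, ℂ)) (c : ℂ) (t : ℝ) :
    timeDensity m (energyShift (2 * m * r).toNNReal g - c • g) t
      = ‖Complex.exp (r * t * Complex.I) - c‖ ^ 2 * timeDensity m g t := by
  have h_amplitude (h : 𝓓(puncturedLine, ℂ)) :
      amplitude (t / (2 * m)) (energyShift (2 * m * r).toNNReal h - c • h)
        = (Complex.exp (r * t * Complex.I) - c) * amplitude (t / (2 * m)) h := by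
    have h_phase : Complex.I * ((t / (2 * m) : ℝ) : ℂ) * ((2 * m * r : ℝ) : ℂ)
        = r * t * Complex.I := by
      have hm₀ : (m : ℂ) ≠ 0 := Complex.ofReal_ne_zero.mpr hm.ne'
      push_cast
      field_simp
    rw [amplitude_sub_smul, amplitude_energyShift, Real.coe_toNNReal _ (by positivity), h_phase,
      sub_mul]
  simp only [timeDensity, map_sub, map_smul, dilate_neg_one_energyShift, h_amplitude, norm_mul,
    mul_pow]
  ring

theorem integral_integral_exp_mul_eq_timeDensity (m t : ℝ) (g : 𝓓(puncturedLine, ℂ)) :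
    (1 / (2 * Real.pi * m) : ℂ) * ∫ p₁ in Ioi (0 : ℝ), ∫ p₂ in Ioi (0 : ℝ),
      Complex.exp (Complex.I * t / (2 * m) * ((p₂ : ℂ) ^ 2 - (p₁ : ℂ) ^ 2)) *
        (conj (g p₁) * g p₂ + conj (g (-p₁)) * g (-p₂)) * ((Real.sqrt (p₁ * p₂) : ℝ) : ℂ)
      = timeDensity m g t := by
  have h_kernel (p₁ : ℝ) (hp₁ : p₁ ∈ Ioi 0) (p₂ : ℝ) :
      Complex.exp (Complex.I * t / (2 * m) * ((p₂ : ℂ) ^ 2 - (p₁ : ℂ) ^ 2)) *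
        (conj (g p₁) * g p₂ + conj (g (-p₁)) * g (-p₂)) * ((√(p₁ * p₂) : ℝ) : ℂ)
      = conj (amplitudeIntegrand (t / (2 * m)) g p₁) * amplitudeIntegrand (t / (2 * m)) g p₂ +
        conj (amplitudeIntegrand (t / (2 * m)) (dilate (-1) g) p₁) *
          amplitudeIntegrand (t / (2 * m)) (dilate (-1) g) p₂ := by
    have h_exp : Complex.exp (Complex.I * t / (2 * m) * ((p₂ : ℂ) ^ 2 - (p₁ : ℂ) ^ 2))
        = conj (Complex.exp (Complex.I * (t / (2 * m) : ℝ) * p₁ ^ 2)) *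
          Complex.exp (Complex.I * (t / (2 * m) : ℝ) * p₂ ^ 2) := by
      rw [← Complex.exp_conj, ← Complex.exp_add]
      simp only [map_mul, map_pow, Complex.conj_I, Complex.conj_ofReal]
      push_cast
      ring_nf
    have h_neg (p : ℝ) : dilate (-1) g p = g (-p) := by
      rw [dilate_apply, Units.val_neg, Units.val_one, mul_neg_one]
    simp only [amplitudeIntegrand, h_exp, h_neg, Real.sqrt_mul (le_of_lt hp₁), map_mul,
      Complex.conj_ofReal, Complex.ofReal_mul]
    ring
  have h_int (h : 𝓓(puncturedLine, ℂ)) :=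
    (integrable_amplitudeIntegrand (t / (2 * m)) h).integrableOn (s := Ioi 0)
  have h_int_conj (h : 𝓓(puncturedLine, ℂ)) :
      IntegrableOn (fun p => conj (amplitudeIntegrand (t / (2 * m)) h p)) (Ioi 0) :=
    Complex.conjLIE.integrable_comp_iff.mpr (h_int h)
  rw [setIntegral_congr_fun measurableSet_Ioi fun p₁ hp₁ => integral_congr_ae <|
      .of_forall (h_kernel p₁ hp₁),
    integral_integral_mul_add_mul (h_int_conj g) (h_int_conj _) (h_int g) (h_int _),
    integral_conj, integral_conj, ← amplitude, ← amplitude, Complex.conj_mul', Complex.conj_mul',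
    timeDensity]
  push_cast
  ring

/-- `τ` is the canonical time observable of a free particle of mass `m`, given by its matrix
elements between Schwartz functions. -/
def IsCanonical (m : ℝ) (τ : POVM ℝ L2R) : Prop :=
  ∀ φ ψ : 𝓢(ℝ, ℂ), ∀ (hφ : MemLp φ 2 volume) (hψ : MemLp ψ 2 volume),
    ∀ B : Set ℝ, MeasurableSet B →
      ⟪hφ.toLp φ, τ.toFun B (hψ.toLp ψ)⟫ = (1 / (2 * Real.pi * m) : ℂ) *
        ∫ t in B, ∫ p₁ in Ioi (0 : ℝ), ∫ p₂ in Ioi (0 : ℝ),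
          Complex.exp (Complex.I * t / (2 * m) * ((p₂ : ℂ) ^ 2 - (p₁ : ℂ) ^ 2)) *
            (conj (fourierT φ p₁) * fourierT ψ p₂ + conj (fourierT φ (-p₁)) * fourierT ψ (-p₂)) *
            ((√(p₁ * p₂) : ℝ) : ℂ)

variable {m : ℝ} {τ : POVM ℝ L2R}

theorem IsCanonical.inner_momentumState (hτ : IsCanonical m τ) (g : 𝓓(puncturedLine, ℂ))
    {B : Set ℝ} (hB : MeasurableSet B) :
    ⟪momentumState g, τ.toFun B (momentumState g)⟫ =
      ((∫ t in B, timeDensity m g t : ℝ) : ℂ) := by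
  have h_formula := hτ (ofMomentum g) (ofMomentum g) ((ofMomentum g).memLp 2)
    ((ofMomentum g).memLp 2) B hB
  rw [← integral_const_mul] at h_formula
  simp only [fourierT_ofMomentum, integral_integral_exp_mul_eq_timeDensity] at h_formula
  rwa [integral_complex_ofReal] at h_formula

theorem IsCanonical.integrable_timeDensity (hτ : IsCanonical m τ) (g : 𝓓(puncturedLine, ℂ)) :
    Integrable (timeDensity m g) := by
  by_contra h_not
  have h_norm := hτ.inner_momentumState g .univ
  rw [setIntegral_univ, integral_undef h_not, τ.normalized, one_apply_eq_self, Complex.ofReal_zero,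
    inner_self_eq_zero] at h_norm
  have hg : g = 0 := momentumState_injective (h_norm.trans (map_zero _).symm)
  have h_zero : timeDensity m g = 0 := by
    funext t
    simp [hg, timeDensity, amplitude, amplitudeIntegrand]
  exact h_not (h_zero ▸ integrable_zero _ _ _)

theorem IsCanonical.meas_momentumState (hτ : IsCanonical m τ) (hm : 0 < m)
    (g : 𝓓(puncturedLine, ℂ)) :
    τ.meas (momentumState g) = volume.withDensity fun t => ENNReal.ofReal (timeDensity m g t) := by
  ext B hB
  rw [τ.meas_apply _ hB, hτ.inner_momentumState g hB, Complex.ofReal_re, withDensity_apply _ hB,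
    ofReal_integral_eq_lintegral_ofReal (hτ.integrable_timeDensity g).integrableOn
      (.of_forall (timeDensity_nonneg hm g))]

theorem IsCanonical.representsMul_energyShift (hτ : IsCanonical m τ) (hm : 0 < m) {r : ℝ}
    (hr : 0 ≤ r) (g : 𝓓(puncturedLine, ℂ)) :
    τ.RepresentsMul (fun t => Complex.exp (r * t * Complex.I)) (momentumState g)
      (momentumState (energyShift (2 * m * r).toNNReal g)) := by
  intro c
  rw [← map_smul, ← map_sub, hτ.meas_momentumState hm, hτ.meas_momentumState hm,
    ← withDensity_mul₀ (hτ.integrable_timeDensity g).aemeasurable.ennreal_ofReal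
      (by fun_prop)]
  congr with t
  rw [timeDensity_energyShift_sub_smul hm hr, ENNReal.ofReal_mul (by positivity), Pi.mul_apply,
    mul_comm, ENNReal.ofReal_pow (norm_nonneg _), ofReal_norm]

theorem IsCanonical.toFun_eq_of_le_smul (hτ : IsCanonical m τ) (hm : 0 < m) {M : POVM ℝ L2R}
    {C : ℝ} (hC : 0 ≤ C) (hM : ∀ B, MeasurableSet B → M.toFun B ≤ C • τ.toFun B) {B : Set ℝ}
    (hB : MeasurableSet B) : M.toFun B = τ.toFun B := by
  refine POVM.toFun_eq_of_le_smul denseRange_momentumState ?_ hC hM hB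
  rintro _ ⟨g, rfl⟩ r hr
  exact ⟨_, hτ.representsMul_energyShift hm hr g⟩

end TimeObservable

theorem stmt14 (m : ℝ) (hm : 0 < m)
    (τ : POVM ℝ L2R)
    -- τ is the canonical time observable of a free particle of mass m
    (hτ : ∀ φ ψ : 𝓢(ℝ, ℂ),
      ∀ (hφ : MemLp (⇑φ) 2 (volume : Measure ℝ)) (hψ : MemLp (⇑ψ) 2 (volume : Measure ℝ)),
      ∀ B : Set ℝ, MeasurableSet B →
        ⟪hφ.toLp ⇑φ, τ.toFun B (hψ.toLp ⇑ψ)⟫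
          = (1 / (2 * Real.pi * m) : ℂ) *
            ∫ t in B, ∫ p₁ in Ioi (0 : ℝ), ∫ p₂ in Ioi (0 : ℝ),
              Complex.exp (Complex.I * t / (2 * m) * ((p₂ : ℂ) ^ 2 - (p₁ : ℂ) ^ 2)) *
                (conj (fourierT (⇑φ) p₁) * fourierT (⇑ψ) p₂ +
                  conj (fourierT (⇑φ) (-p₁)) * fourierT (⇑ψ) (-p₂)) *
                ((Real.sqrt (p₁ * p₂) : ℝ) : ℂ)) :
    -- τ is an extreme point of the convex set of ALL POVMs on (ℝ, ℬ(ℝ)) acting on L²(ℝ)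
    ∀ M₁ M₂ : POVM ℝ L2R, ∀ t : ℝ, 0 < t → t < 1 →
      (∀ B : Set ℝ, MeasurableSet B →
        τ.toFun B = (t : ℂ) • M₁.toFun B + ((1 - t : ℝ) : ℂ) • M₂.toFun B) →
      ∀ B : Set ℝ, MeasurableSet B →
        M₁.toFun B = τ.toFun B ∧ M₂.toFun B = τ.toFun B := by
  intro M₁ M₂ t ht₀ ht₁ h B hB
  have hτ' : TimeObservable.IsCanonical m τ := hτ
  have hs₀ : 0 < 1 - t := sub_pos.mpr ht₁
  simp only [Complex.coe_smul] at h
  have h₁ (B : Set ℝ) (hB : MeasurableSet B) : M₁.toFun B ≤ t⁻¹ • τ.toFun B :=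
    POVM.le_inv_smul_of_eq_smul_add_smul ht₀ hs₀.le hB (h B hB)
  have h₂ (B : Set ℝ) (hB : MeasurableSet B) : M₂.toFun B ≤ (1 - t)⁻¹ • τ.toFun B :=
    POVM.le_inv_smul_of_eq_smul_add_smul hs₀ ht₀.le hB ((h B hB).trans (add_comm _ _))
  exact ⟨hτ'.toFun_eq_of_le_smul hm (inv_nonneg.mpr ht₀.le) h₁ hB,
    hτ'.toFun_eq_of_le_smul hm (inv_nonneg.mpr hs₀.le) h₂ hB⟩

end
end

section
/- Fix m > 0 and let V(t) (t ∈ ℝ) be the free evolution on L²(ℝ): V(t) = 𝓕* ∘ (multiplication by p ↦ e^{itp²/(2m)}) ∘ 𝓕, where 𝓕 is the Fourier–Plancherel transform. Then there exists NO projection valued POVM P on (ℝ, ℬ(ℝ)) acting on L²(ℝ) satisfying the time covariance condition V(t) P(B) V(t)* = P(B + t) for all t ∈ ℝ and all Borel B ⊆ ℝ. -/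
open MeasureTheory Set
open scoped ComplexConjugate SchwartzMap

local notation "⟪" x ", " y "⟫" => @inner ℂ _ _ x y

noncomputable section

/-!
If `P` is a covariant projection valued measure, put `E_t = P [t, ∞)`, so that `E_t V_t = V_t E_0`.
The inequality `E_t ≤ E_0` says that all matrix elements `⟪(1 - E_0) φ, V_t E_0 ψ⟫` vanish, which is
the case for `t ≥ 0` by monotonicity. As the energy `p² / (2m)` is nonnegative, a matrix element of
`V_t` is the boundary value of a bounded holomorphic function on the upper half-plane, and such a
function is zero once it vanishes on a half-line. Hence `E_t ≤ E_0` for all `t`, and likewise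
`E_{a + t} ≤ E_a`. So `t ↦ E_t` is constant, every bounded interval has `P`-measure zero, and
`1 = P ℝ = 0`.
-/

section UpperHalfPlane

open Complex HadamardThreeLines

variable {E : Type*} [NormedAddCommGroup E] [NormedSpace ℂ E] {f : ℂ → E} {C : ℝ}

theorem eq_zero_of_mem_verticalStrip {l u : ℝ} (hf : DiffContOnCl ℂ f (verticalStrip l u))
    (hC : ∀ z ∈ verticalClosedStrip l u, ‖f z‖ ≤ C) (h0 : ∀ z, z.re = l → f z = 0)
    {z : ℂ} (hz : z ∈ verticalStrip l u) : f z = 0 := by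
  have hlu : l < u := hz.1.trans hz.2
  have hexp : 1 - (z.re - l) / (u - l) ≠ 0 := by
    have : (z.re - l) / (u - l) < 1 := by
      rw [div_lt_one (sub_pos.2 hlu)]
      linarith [hz.2]
    linarith
  have hbdd : BddAbove ((norm ∘ f) '' verticalClosedStrip l u) :=
    ⟨C, forall_mem_image.2 hC⟩
  have hthree := norm_le_interp_of_mem_verticalClosedStrip' hlu (Ioo_subset_Icc_self hz) hf hbdd
    (fun w hw => (norm_eq_zero.2 (h0 w hw)).le)
    (fun w (hw : w.re = u) => hC w ⟨hw ▸ hlu.le, hw.le⟩)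
  rwa [Real.zero_rpow hexp, zero_mul, norm_le_zero_iff] at hthree

theorem im_exp_mul_I (w : ℂ) : (cexp (w * I)).im = Real.exp (-w.im) * Real.sin w.re := by
  rw [exp_im, mul_I_re, mul_I_im]

theorem exists_mem_verticalStrip_exp_mul_I_eq {z : ℂ} (hz : 0 < z.im) :
    ∃ w ∈ verticalStrip 0 Real.pi, cexp (w * I) = z := by
  have hz0 : z ≠ 0 := by
    rintro rfl
    exact hz.ne rfl
  refine ⟨-I * log z, ?_, ?_⟩
  · have hre : (-I * log z).re = arg z := by
      rw [neg_mul, neg_re, I_mul_re, neg_neg, log_im]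
    have harg0 : arg z ≠ 0 := fun h => hz.ne' (arg_eq_zero_iff.1 h).2
    have hargpi : arg z ≠ Real.pi := fun h => hz.ne' (arg_eq_pi_iff.1 h).2
    rw [verticalStrip, mem_preimage, hre]
    exact ⟨(arg_nonneg_iff.2 hz.le).lt_of_ne' harg0, (arg_le_pi z).lt_of_ne hargpi⟩
  · rw [mul_right_comm, neg_mul, I_mul_I, neg_neg, one_mul, exp_log hz0]

-- `w ↦ exp (i w)` maps the strip `0 < re w < π` onto the upper half-plane and the line `re w = 0`
-- onto the positive real axis, so the three lines theorem applies.
theorem eqOn_zero_upperHalfPlane (hf : DiffContOnCl ℂ f {z | 0 < z.im})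
    (hC : ∀ z : ℂ, 0 ≤ z.im → ‖f z‖ ≤ C) (h0 : ∀ t : ℝ, 0 < t → f t = 0) :
    EqOn f 0 {z | 0 ≤ z.im} := by
  have hstrip : DiffContOnCl ℂ (fun w => f (cexp (w * I))) (verticalStrip 0 Real.pi) := by
    refine hf.comp (Differentiable.diffContOnCl (by fun_prop)) fun w hw => ?_
    rw [mem_ofPred_eq, im_exp_mul_I]
    exact mul_pos (Real.exp_pos _) (Real.sin_pos_of_mem_Ioo hw)
  have hbound (w : ℂ) (hw : w ∈ verticalClosedStrip 0 Real.pi) : ‖f (cexp (w * I))‖ ≤ C := by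
    refine hC _ ?_
    rw [im_exp_mul_I]
    exact mul_nonneg (Real.exp_pos _).le (Real.sin_nonneg_of_mem_Icc hw)
  have hleft (w : ℂ) (hw : w.re = 0) : f (cexp (w * I)) = 0 := by
    have hreal : cexp (w * I) = (Real.exp (-w.im) : ℝ) := by
      rw [ofReal_exp]
      congr 1
      apply Complex.ext <;> simp [hw]
    rw [hreal]
    exact h0 _ (Real.exp_pos _)
  have hopen : EqOn f 0 {z | 0 < z.im} := by
    intro z hz
    obtain ⟨w, hw, rfl⟩ := exists_mem_verticalStrip_exp_mul_I_eq hz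
    exact eq_zero_of_mem_verticalStrip hstrip hbound hleft hw
  have hclosure := closure_setOfPred_lt_im 0
  refine hopen.of_subset_closure (hclosure ▸ hf.continuousOn) continuousOn_const ?_ hclosure.ge
  exact fun z (hz : 0 < z.im) => hz.le

end UpperHalfPlane

section FourierLaplace

open Complex Filter Topology

variable {α E : Type*} [MeasurableSpace α] {μ : Measure α} [NormedAddCommGroup E]
  [NormedSpace ℂ E] {g : α → ℝ} {f : α → E}

/-- The Fourier–Laplace transform `z ↦ ∫ e^{iz g(a)} f(a) dμ(a)` of the density `f` in the energy
variable `g`. For `g ≥ 0` it is used to continue time evolutions into the upper half-plane. -/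
def fourierLaplace (μ : Measure α) (g : α → ℝ) (f : α → E) (z : ℂ) : E :=
  ∫ a, cexp (I * z * g a) • f a ∂μ

theorem norm_cexp_I_mul_mul (z : ℂ) (x : ℝ) : ‖cexp (I * z * x)‖ = Real.exp (-(z.im * x)) := by
  rw [norm_exp, re_mul_ofReal, I_mul_re, neg_mul]

theorem norm_cexp_I_mul_mul_le_one {z : ℂ} (hz : 0 ≤ z.im) {x : ℝ} (hx : 0 ≤ x) :
    ‖cexp (I * z * x)‖ ≤ 1 := by
  rw [norm_cexp_I_mul_mul, Real.exp_le_one_iff, neg_nonpos]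
  exact mul_nonneg hz hx

theorem mul_norm_cexp_I_mul_mul_le {δ : ℝ} (hδ : 0 < δ) {z : ℂ} (hz : δ ≤ z.im) {x : ℝ}
    (hx : 0 ≤ x) : x * ‖cexp (I * z * x)‖ ≤ 1 / δ := by
  rw [norm_cexp_I_mul_mul, Real.exp_neg, ← div_eq_mul_inv, div_le_div_iff₀ (Real.exp_pos _) hδ]
  have hmul : δ * x ≤ z.im * x := mul_le_mul_of_nonneg_right hz hx
  linarith [Real.add_one_le_exp (z.im * x)]

theorem norm_cexp_I_mul_mul_smul_le {z : ℂ} (hz : 0 ≤ z.im) {x : ℝ} (hx : 0 ≤ x) (v : E) :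
    ‖cexp (I * z * x) • v‖ ≤ ‖v‖ := by
  rw [norm_smul]
  exact mul_le_of_le_one_left (norm_nonneg v) (norm_cexp_I_mul_mul_le_one hz hx)

theorem aestronglyMeasurable_cexp_I_mul_mul_smul (hg : AEMeasurable g μ)
    (hf : AEStronglyMeasurable f μ) (z : ℂ) :
    AEStronglyMeasurable (fun a => cexp (I * z * g a) • f a) μ :=
  ((hg.complex_ofReal.const_mul _).cexp.aestronglyMeasurable).smul hf

theorem norm_fourierLaplace_le (hg0 : ∀ᵐ a ∂μ, 0 ≤ g a) (hf : Integrable f μ) {z : ℂ}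
    (hz : 0 ≤ z.im) : ‖fourierLaplace μ g f z‖ ≤ ∫ a, ‖f a‖ ∂μ :=
  norm_integral_le_of_norm_le hf.norm <|
    hg0.mono fun a ha => norm_cexp_I_mul_mul_smul_le hz ha (f a)

theorem continuousOn_fourierLaplace (hg : AEMeasurable g μ) (hg0 : ∀ᵐ a ∂μ, 0 ≤ g a)
    (hf : Integrable f μ) : ContinuousOn (fourierLaplace μ g f) {z | 0 ≤ z.im} :=
  continuousOn_of_dominated
    (fun z _ => aestronglyMeasurable_cexp_I_mul_mul_smul hg hf.1 z)
    (fun _ hz => hg0.mono fun a ha => norm_cexp_I_mul_mul_smul_le hz ha (f a))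
    hf.norm (Eventually.of_forall fun _ => by fun_prop)

theorem differentiableAt_fourierLaplace (hg : AEMeasurable g μ) (hg0 : ∀ᵐ a ∂μ, 0 ≤ g a)
    (hf : Integrable f μ) {z : ℂ} (hz : 0 < z.im) :
    DifferentiableAt ℂ (fourierLaplace μ g f) z := by
  have hδ : 0 < z.im / 2 := half_pos hz
  have hnhds : {w : ℂ | z.im / 2 < w.im} ∈ 𝓝 z :=
    (isOpen_lt continuous_const continuous_im).mem_nhds (half_lt_self hz)
  have hmeas := aestronglyMeasurable_cexp_I_mul_mul_smul hg hf.1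
  refine (hasDerivAt_integral_of_dominated_loc_of_deriv_le
    (F' := fun w a => (I * g a) • cexp (I * w * g a) • f a)
    (bound := fun a => 1 / (z.im / 2) * ‖f a‖)
    hnhds (Eventually.of_forall hmeas) ?_ ?_ ?_ (hf.norm.const_mul _) ?_).2.differentiableAt
  · exact hf.norm.mono' (hmeas z) <|
      hg0.mono fun a ha => norm_cexp_I_mul_mul_smul_le hz.le ha (f a)
  · exact (hg.complex_ofReal.const_mul I).aestronglyMeasurable.smul (hmeas z)
  · filter_upwards [hg0] with a ha w hw
    rw [norm_smul, norm_smul, ← mul_assoc, norm_mul, norm_I, one_mul, norm_real,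
      Real.norm_of_nonneg ha]
    gcongr
    exact mul_norm_cexp_I_mul_mul_le hδ (le_of_lt hw) ha
  · refine Eventually.of_forall fun a w _ => ?_
    have hexp := (((hasDerivAt_id w).const_mul I).mul_const (g a : ℂ)).cexp.smul_const (f a)
    refine hexp.congr_deriv ?_
    rw [smul_smul, id, mul_one, mul_comm]

theorem diffContOnCl_fourierLaplace (hg : AEMeasurable g μ) (hg0 : ∀ᵐ a ∂μ, 0 ≤ g a)
    (hf : Integrable f μ) : DiffContOnCl ℂ (fourierLaplace μ g f) {z | 0 < z.im} where
  differentiableOn _ hz := (differentiableAt_fourierLaplace hg hg0 hf hz).differentiableWithinAt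
  continuousOn := by
    rw [closure_setOfPred_lt_im]
    exact continuousOn_fourierLaplace hg hg0 hf

end FourierLaplace

section HilbertSpace

variable {H : Type*} [NormedAddCommGroup H] [InnerProductSpace ℂ H]

/-- The evolution `V` has nonnegative energy, i.e. `V t = e^{itA}` for some `A ≥ 0`. This is encoded
by what the spectral theorem gives for the matrix elements of `V`: they are the boundary values of
bounded holomorphic functions on the upper half-plane. -/
def HasNonnegEnergy (V : ℝ → (H ≃ₗᵢ[ℂ] H)) : Prop :=
  ∀ φ ψ : H, ∃ (F : ℂ → ℂ) (C : ℝ), DiffContOnCl ℂ F {z | 0 < z.im} ∧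
    (∀ z : ℂ, 0 ≤ z.im → ‖F z‖ ≤ C) ∧ ∀ t : ℝ, F t = ⟪φ, V t ψ⟫

theorem HasNonnegEnergy.inner_eq_zero {V : ℝ → (H ≃ₗᵢ[ℂ] H)} (hV : HasNonnegEnergy V) {φ ψ : H}
    (h : ∀ t : ℝ, 0 < t → ⟪φ, V t ψ⟫ = 0) (t : ℝ) : ⟪φ, V t ψ⟫ = 0 := by
  obtain ⟨F, C, hF, hC, hFV⟩ := hV φ ψ
  rw [← hFV]
  exact eqOn_zero_upperHalfPlane hF hC (fun s hs => (hFV s).trans (h s hs)) (Complex.ofReal_im t).ge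

variable [CompleteSpace H]

theorem isStarProjection_le_iff_inner_eq_zero {p q : H →L[ℂ] H} (hp : IsStarProjection p)
    (hq : IsStarProjection q) : p ≤ q ↔ ∀ φ χ : H, ⟪(1 - q) φ, p χ⟫ = 0 := by
  rw [hp.le_iff_mul_eq_right hq, eq_comm, ← sub_eq_zero, ← one_sub_mul]
  have hadj (φ χ : H) : ⟪(1 - q) φ, p χ⟫ = ⟪φ, ((1 - q) * p) χ⟫ :=
    hq.one_sub.isSelfAdjoint.isSymmetric φ (p χ)
  simp only [hadj]
  refine ⟨fun h φ χ => ?_, fun h => ?_⟩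
  · rw [h, zero_apply, inner_zero_right]
  · ext χ
    exact ext_inner_left ℂ fun φ => (h φ χ).trans (inner_zero_right φ).symm

end HilbertSpace

namespace POVM

variable {Ω H : Type*} [MeasurableSpace Ω] [NormedAddCommGroup H] [InnerProductSpace ℂ H]
  [CompleteSpace H] {A B : Set Ω}

theorem toFun_empty (M : POVM Ω H) : M.toFun ∅ = 0 := by
  ext ψ
  refine ext_inner_left ℂ fun φ => ?_
  have hconst := (M.m_iUnion (fun _ => ∅) (fun _ => MeasurableSet.empty)
    (fun _ _ _ => disjoint_bot_left) φ ψ).summable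
  rw [zero_apply, inner_zero_right]
  exact (summable_const_iff _).1 hconst

open Classical in
/-- The complex measure `B ↦ ⟪φ, M(B) ψ⟫` of matrix elements of a POVM, which gives access to the
additivity properties of vector measures. Those vanish on nonmeasurable sets by convention. -/
def matrixElement (M : POVM Ω H) (φ ψ : H) : ComplexMeasure Ω where
  measureOf' B := if MeasurableSet B then ⟪φ, M.toFun B ψ⟫ else 0
  empty' := by
    rw [if_pos MeasurableSet.empty, M.toFun_empty, zero_apply,
      inner_zero_right]
  not_measurable' _ hB := if_neg hB
  m_iUnion' s hs hd := by
    simpa only [hs, MeasurableSet.iUnion hs, if_true] using M.m_iUnion s hs hd φ ψ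

theorem matrixElement_apply (M : POVM Ω H) (φ ψ : H) (hB : MeasurableSet B) :
    M.matrixElement φ ψ B = ⟪φ, M.toFun B ψ⟫ :=
  if_pos hB

theorem toFun_sdiff (M : POVM Ω H) (hA : MeasurableSet A) (hB : MeasurableSet B) (hAB : A ⊆ B) :
    M.toFun (B \ A) = M.toFun B - M.toFun A := by
  ext ψ
  refine ext_inner_left ℂ fun φ => ?_
  have hadd := (M.matrixElement φ ψ).of_add_of_sdiff hA hB hAB
  rw [matrixElement_apply M φ ψ hA, matrixElement_apply M φ ψ hB,
    matrixElement_apply M φ ψ (hB.diff hA)] at hadd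
  rw [sub_apply, inner_sub_right, ← hadd, add_sub_cancel_left]

theorem toFun_mono (M : POVM Ω H) (hA : MeasurableSet A) (hB : MeasurableSet B) (hAB : A ⊆ B) :
    M.toFun A ≤ M.toFun B := by
  rw [ContinuousLinearMap.le_def, ← M.toFun_sdiff hA hB hAB]
  exact M.isPositive _ (hB.diff hA)

theorem toFun_iUnion_eq_zero {ι : Type*} [Countable ι] (M : POVM Ω H) {s : ι → Set Ω}
    (hs : ∀ i, MeasurableSet (s i)) (hd : Pairwise (Function.onFun Disjoint s))
    (h0 : ∀ i, M.toFun (s i) = 0) : M.toFun (⋃ i, s i) = 0 := by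
  ext ψ
  refine ext_inner_left ℂ fun φ => ?_
  rw [← matrixElement_apply M φ ψ (MeasurableSet.iUnion hs),
    VectorMeasure.of_disjoint_iUnion hs hd]
  simp only [matrixElement_apply M φ ψ (hs _), h0, zero_apply,
    inner_zero_right, tsum_zero]

/-- Projection valued POVMs, i.e. spectral measures. -/
def IsProjectionValued (M : POVM Ω H) : Prop :=
  ∀ B : Set Ω, MeasurableSet B → IsStarProjection (M.toFun B)

/-- Time covariance `V(t) M(B) V(t)* = M(B + t)` of a POVM on the time axis, on an arbitrary Hilbert
space. On `L2R` it is `TimeCovariant` by definition. -/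
def IsCovariant (M : POVM ℝ H) (V : ℝ → (H ≃ₗᵢ[ℂ] H)) : Prop :=
  ∀ t : ℝ, ∀ B : Set ℝ, MeasurableSet B → ∀ φ ψ : H,
    ⟪V t φ, M.toFun ((fun s => s + t) '' B) (V t ψ)⟫ = ⟪φ, M.toFun B ψ⟫

variable {P : POVM ℝ H} {V : ℝ → (H ≃ₗᵢ[ℂ] H)}

theorem IsCovariant.toFun_Ici_apply (hcov : P.IsCovariant V) (a t : ℝ) (ψ : H) :
    P.toFun (Ici (a + t)) (V t ψ) = V t (P.toFun (Ici a) ψ) := by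
  refine ext_inner_left ℂ fun φ => ?_
  have h := hcov t (Ici a) measurableSet_Ici ((V t).symm φ) ψ
  rw [image_add_const_Ici, LinearIsometryEquiv.apply_symm_apply] at h
  rw [h, ← (V t).inner_map_map, LinearIsometryEquiv.apply_symm_apply]

theorem IsCovariant.toFun_Ici_le_iff (hcov : P.IsCovariant V) (hP : P.IsProjectionValued)
    (a t : ℝ) : P.toFun (Ici (a + t)) ≤ P.toFun (Ici a) ↔
      ∀ φ ψ : H, ⟪(1 - P.toFun (Ici a)) φ, V t (P.toFun (Ici a) ψ)⟫ = 0 := by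
  rw [isStarProjection_le_iff_inner_eq_zero (hP _ measurableSet_Ici) (hP _ measurableSet_Ici)]
  refine forall_congr' fun φ => ?_
  rw [(V t).surjective.forall]
  simp only [hcov.toFun_Ici_apply]

-- For `t ≥ 0` this is monotonicity; nonnegative energy propagates it to all `t`.
theorem IsCovariant.toFun_Ici_add_le (hcov : P.IsCovariant V) (hP : P.IsProjectionValued)
    (hV : HasNonnegEnergy V) (a t : ℝ) : P.toFun (Ici (a + t)) ≤ P.toFun (Ici a) := by
  rw [hcov.toFun_Ici_le_iff hP]
  intro φ ψ
  refine hV.inner_eq_zero (fun s hs => ?_) t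
  exact (hcov.toFun_Ici_le_iff hP a s).1
    (P.toFun_mono measurableSet_Ici measurableSet_Ici (Ici_subset_Ici.2 (by linarith))) φ ψ

theorem IsCovariant.toFun_Ico_eq_zero (hcov : P.IsCovariant V) (hP : P.IsProjectionValued)
    (hV : HasNonnegEnergy V) {a b : ℝ} (hab : a ≤ b) : P.toFun (Ico a b) = 0 := by
  have hsub : Ici b ⊆ Ici a := Ici_subset_Ici.2 hab
  have hle : P.toFun (Ici a) ≤ P.toFun (Ici b) := by
    simpa only [add_sub_cancel] using hcov.toFun_Ici_add_le hP hV b (a - b)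
  rw [← Ici_sdiff_Ici, P.toFun_sdiff measurableSet_Ici measurableSet_Ici hsub, sub_eq_zero]
  exact hle.antisymm (P.toFun_mono measurableSet_Ici measurableSet_Ici hsub)

end POVM

section Lebesgue

variable {α E : Type*} [MeasurableSpace α] {μ : Measure α} [NormedAddCommGroup E]

theorem nontrivial_Lp [Nontrivial E] {p : ENNReal} [hp : Fact (1 ≤ p)] {s : Set α}
    (hs : MeasurableSet s) (hs0 : μ s ≠ 0) (hs_top : μ s ≠ ⊤) : Nontrivial (Lp E p μ) := by
  obtain ⟨c, hc⟩ := exists_ne (0 : E)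
  refine nontrivial_of_ne (indicatorConstLp p hs hs_top c) 0 (norm_ne_zero_iff.1 ?_)
  rw [norm_indicatorConstLp' (zero_lt_one.trans_le hp.out).ne' hs0]
  have hmeas : 0 < μ.real s := ENNReal.toReal_pos hs0 hs_top
  positivity

variable [InnerProductSpace ℂ E]

theorem continuous_integral_mul_inner {u : α → ℂ} (hu : MemLp u ⊤ μ) :
    Continuous fun x : Lp E 2 μ × Lp E 2 μ => ∫ a, u a * ⟪x.1 a, x.2 a⟫ ∂μ := by
  let T : Lp E 2 μ →L[ℂ] Lp E 2 μ :=
    (ContinuousLinearMap.lsmul ℂ ℂ).holderL μ ⊤ 2 2 (hu.toLp u)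
  have hT (f g : Lp E 2 μ) : ∫ a, u a * ⟪f a, g a⟫ ∂μ = ⟪f, T g⟫ := by
    rw [L2.inner_def]
    refine integral_congr_ae ?_
    filter_upwards [(ContinuousLinearMap.lsmul ℂ ℂ).coeFn_holder (r := 2) (hu.toLp u) g,
      hu.coeFn_toLp] with a hTa hua
    rw [ContinuousLinearMap.holderL_apply_apply, hTa, hua, ContinuousLinearMap.lsmul_apply,
      inner_smul_right]
  simp only [hT]
  fun_prop

end Lebesgue

section FreeEvolution

open FourierTransform Real

/-- The kinetic energy `p² / (2m)` at the momentum `p = -2πq`, where `q` is the frequency variable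
of Mathlib's Fourier transform `∫ e^{-2πiqx} φ(x) dx`. -/
def kineticEnergy (m q : ℝ) : ℝ := (-2 * π * q) ^ 2 / (2 * m)

theorem kineticEnergy_nonneg {m : ℝ} (hm : 0 ≤ m) (q : ℝ) : 0 ≤ kineticEnergy m q := by
  unfold kineticEnergy
  positivity

theorem continuous_kineticEnergy (m : ℝ) : Continuous (kineticEnergy m) := by
  unfold kineticEnergy
  fun_prop

theorem memLp_top_cexp_I_mul_kineticEnergy (m t : ℝ) :
    MemLp (fun q : ℝ => Complex.exp (Complex.I * t * kineticEnergy m q)) ⊤ := by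
  have hcont := continuous_kineticEnergy m
  have hexp : Continuous fun q : ℝ => Complex.exp (Complex.I * t * kineticEnergy m q) := by
    fun_prop
  refine memLp_top_of_bound hexp.aestronglyMeasurable 1 (.of_forall fun q => ?_)
  rw [norm_cexp_I_mul_mul, Complex.ofReal_im, zero_mul, neg_zero, exp_zero]

theorem fourierT_neg_two_pi_mul (φ : ℝ → ℂ) (q : ℝ) :
    fourierT φ (-2 * π * q) = ((√(2 * π) : ℝ) : ℂ)⁻¹ * 𝓕 φ q := by
  rw [fourierT, fourier_real_eq_integral_exp_smul]
  congr 2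
  ext x
  rw [smul_eq_mul]
  congr 2
  push_cast
  ring

theorem conj_fourierT_mul_fourierT (φ ψ : ℝ → ℂ) (c : ℂ) (q : ℝ) :
    (2 * π) • (conj (fourierT φ (-2 * π * q)) * c * fourierT ψ (-2 * π * q)) =
      c * ⟪𝓕 φ q, 𝓕 ψ q⟫ := by
  have hsq : ((√(2 * π) : ℝ) : ℂ) * (√(2 * π) : ℝ) = ((2 * π : ℝ) : ℂ) := by
    rw [← Complex.ofReal_mul, mul_self_sqrt two_pi_pos.le]
  have hne : ((√(2 * π) : ℝ) : ℂ) ≠ 0 := by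
    rw [Complex.ofReal_ne_zero]
    positivity
  rw [fourierT_neg_two_pi_mul, fourierT_neg_two_pi_mul, Complex.real_smul, ← hsq, map_mul,
    map_inv₀, Complex.conj_ofReal, RCLike.inner_apply]
  field_simp

theorem integral_fourierT_eq_integral_fourier (m t : ℝ) (φ ψ : ℝ → ℂ) :
    ∫ p : ℝ, conj (fourierT φ p) * Complex.exp (Complex.I * t * p ^ 2 / (2 * m)) * fourierT ψ p =
      ∫ q : ℝ, Complex.exp (Complex.I * t * kineticEnergy m q) * ⟪𝓕 φ q, 𝓕 ψ q⟫ := by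
  have hsubst := Measure.integral_comp_mul_left (fun p : ℝ => conj (fourierT φ p) *
    Complex.exp (Complex.I * t * p ^ 2 / (2 * m)) * fourierT ψ p) (-2 * π)
  have habs : |(-2 * π)⁻¹| = (2 * π)⁻¹ := by
    rw [abs_inv, neg_mul, abs_neg, abs_of_pos two_pi_pos]
  rw [habs, eq_comm, inv_smul_eq_iff₀ two_pi_pos.ne'] at hsubst
  rw [hsubst, ← integral_smul]
  congr 1
  ext q
  rw [conj_fourierT_mul_fourierT]
  congr 2
  rw [kineticEnergy]
  push_cast
  ring

theorem IsFreeEvolution.inner_eq_integral {m : ℝ} {V : ℝ → (L2R ≃ₗᵢ[ℂ] L2R)}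
    (hV : IsFreeEvolution m V) (t : ℝ) (φ ψ : L2R) :
    ⟪φ, V t ψ⟫ = ∫ q, Complex.exp (Complex.I * t * kineticEnergy m q) *
      ⟪(𝓕 φ : L2R) q, (𝓕 ψ : L2R) q⟫ := by
  have hdense := SchwartzMap.denseRange_toLpCLM (E := ℝ) (F := ℂ) (p := 2) (μ := volume)
    ENNReal.ofNat_ne_top
  refine hdense.induction_on₂ (p := fun φ ψ : L2R => ⟪φ, V t ψ⟫ =
    ∫ q, Complex.exp (Complex.I * t * kineticEnergy m q) * ⟪(𝓕 φ : L2R) q, (𝓕 ψ : L2R) q⟫)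
    ?_ (fun φ ψ => ?_) φ ψ
  · have hF : Continuous (𝓕 : L2R → L2R) := (Lp.fourierTransformₗᵢ ℝ ℂ).continuous
    have hcont := continuous_integral_mul_inner (E := ℂ) (memLp_top_cexp_I_mul_kineticEnergy m t)
    exact isClosed_eq (by fun_prop)
      (hcont.comp ((hF.comp continuous_fst).prodMk (hF.comp continuous_snd)))
  · simp only [SchwartzMap.toLpCLM_apply, SchwartzMap.toLp_fourier_eq]
    refine (hV t φ ψ (φ.memLp 2) (ψ.memLp 2)).trans ?_
    rw [integral_fourierT_eq_integral_fourier]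
    refine integral_congr_ae ?_
    filter_upwards [(𝓕 φ).coeFn_toLp 2 volume, (𝓕 ψ).coeFn_toLp 2 volume] with q hφ hψ
    rw [hφ, hψ, SchwartzMap.fourier_coe, SchwartzMap.fourier_coe]

theorem IsFreeEvolution.hasNonnegEnergy {m : ℝ} (hm : 0 ≤ m) {V : ℝ → (L2R ≃ₗᵢ[ℂ] L2R)}
    (hV : IsFreeEvolution m V) : HasNonnegEnergy V := by
  intro φ ψ
  have hmeas := (continuous_kineticEnergy m).aemeasurable (μ := volume)
  have hnonneg : ∀ᵐ q, 0 ≤ kineticEnergy m q := .of_forall (kineticEnergy_nonneg hm)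
  have hinner : Integrable fun q => ⟪(𝓕 φ : L2R) q, (𝓕 ψ : L2R) q⟫ := L2.integrable_inner _ _
  exact ⟨fourierLaplace volume (kineticEnergy m) fun q => ⟪(𝓕 φ : L2R) q, (𝓕 ψ : L2R) q⟫, _,
    diffContOnCl_fourierLaplace hmeas hnonneg hinner,
    fun _ => norm_fourierLaplace_le hnonneg hinner, fun t => (hV.inner_eq_integral t φ ψ).symm⟩

end FreeEvolution

instance nontrivial_L2R : Nontrivial L2R :=
  nontrivial_Lp (measurableSet_Icc (a := (0 : ℝ)) (b := 1)) (by simp) (by simp)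

theorem stmt15_general {H : Type*} [NormedAddCommGroup H] [InnerProductSpace ℂ H]
    [CompleteSpace H] [Nontrivial H] (V : ℝ → (H ≃ₗᵢ[ℂ] H)) (hV : HasNonnegEnergy V) :
    ¬ ∃ P : POVM ℝ H, P.IsCovariant V ∧ P.IsProjectionValued := by
  rintro ⟨P, hcov, hP⟩
  have hIco (n : ℤ) : P.toFun (Ico (n : ℝ) (n + 1)) = 0 :=
    hcov.toFun_Ico_eq_zero hP hV (by linarith)
  have huniv : P.toFun univ = 0 := by
    rw [← iUnion_Ico_intCast ℝ]
    exact P.toFun_iUnion_eq_zero (fun _ => measurableSet_Ico) (pairwise_disjoint_Ico_intCast ℝ) hIco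
  exact one_ne_zero (P.normalized.symm.trans huniv)

theorem stmt15 (m : ℝ) (hm : 0 < m)
    (V : ℝ → (L2R ≃ₗᵢ[ℂ] L2R)) (hV : IsFreeEvolution m V) :
    -- there is no time-covariant projection valued POVM
    ¬ ∃ P : POVM ℝ L2R, TimeCovariant V P ∧
        ∀ B : Set ℝ, MeasurableSet B →
          P.toFun B ∘L P.toFun B = P.toFun B ∧ IsSelfAdjoint (P.toFun B) :=
  fun ⟨P, hcov, hP⟩ => stmt15_general V (hV.hasNonnegEnergy hm.le)
    ⟨P, hcov, fun B hB => ⟨(hP B hB).1, (hP B hB).2⟩⟩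

end
end
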